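/- For every N ≥ 1, all real a, b, and every u ∈ C_0^∞(ℝ^N\{0}): (∫ |u|²/|x|^{2a} dx)·(∫ |∇u|²/|x|^{2b} dx) ≥ min{(N−(a+b+1))²/4, (N−(3b−a+3))²/4}·(∫ |u|²/|x|^{a+b+1} dx)². -/

import Mathlib

open MeasureTheory Real Filter
open scoped Topology

theorem integral_fderiv_apply_self {N : ℕ} {W : EuclideanSpace ℝ (Fin N) → ℝ}
    (hW : ContDiff ℝ 1 W) (hcs : HasCompactSupport W) :
    ∫ x, fderiv ℝ W x x = -(N * ∫ x, W x) := by
  have hcoord (i : Fin N) :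
      Integrable (fun x => fderiv ℝ W x (EuclideanSpace.single i 1) * x i) ∧
      ∫ x, fderiv ℝ W x (EuclideanSpace.single i 1) * x i = -∫ x, W x := by
    set v : EuclideanSpace ℝ (Fin N) := EuclideanSpace.single i 1 with hv
    let p : EuclideanSpace ℝ (Fin N) →L[ℝ] ℝ := EuclideanSpace.proj i
    have hpv : p v = 1 := by simp [p, hv]
    have hd : Integrable (fun x => fderiv ℝ W x v * p x) := by
      refine Continuous.integrable_of_hasCompactSupport ?_ ?_
      · have := hW.continuous_fderiv one_ne_zero
        fun_prop
      · exact (hcs.fderiv_apply (𝕜 := ℝ) v).mul_right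
    have hWi : Integrable W := hW.continuous.integrable_of_hasCompactSupport hcs
    have hWp : Integrable (fun x => W x * p x) :=
      (hW.continuous.mul p.continuous).integrable_of_hasCompactSupport hcs.mul_right
    refine ⟨hd, ?_⟩
    have := integral_mul_fderiv_eq_neg_fderiv_mul_of_integrable (μ := volume) (v := v)
      (f := W) (g := p) hd (by simpa [hpv] using hWi) hWp
      (fun x _ => hW.differentiable one_ne_zero x) (fun x _ => p.differentiable x)
    simp only [ContinuousLinearMap.fderiv, hpv, mul_one] at this
    rw [this, neg_neg]
    rfl
  have hsum (x : EuclideanSpace ℝ (Fin N)) :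
      fderiv ℝ W x x = ∑ i, fderiv ℝ W x (EuclideanSpace.single i 1) * x i := by
    have h := congrArg (fderiv ℝ W x) ((EuclideanSpace.basisFun (Fin N) ℝ).sum_repr x)
    rw [← h]
    simp [mul_comm]
  simp_rw [hsum]
  rw [integral_finsetSum _ fun i _ => (hcoord i).1]
  simp [fun i => (hcoord i).2]

theorem contDiff_div_norm_rpow {E : Type*} [NormedAddCommGroup E] [InnerProductSpace ℝ E]
    {n : ℕ∞} {g : E → ℝ} (hg : ContDiff ℝ n g) (h0 : (0 : E) ∉ tsupport g) (c : ℝ) :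
    ContDiff ℝ n fun x => g x / ‖x‖ ^ c := by
  rw [contDiff_iff_contDiffAt]
  intro x
  rcases eq_or_ne x 0 with rfl | hx
  · refine (contDiffAt_const (c := (0 : ℝ))).congr_of_eventuallyEq ?_
    filter_upwards [notMem_tsupport_iff_eventuallyEq.mp h0] with y hy
    simp [hy]
  · have h := norm_pos_iff.mpr hx
    exact hg.contDiffAt.div ((contDiffAt_norm ℝ hx).rpow_const_of_ne h.ne')
      (rpow_pos_of_pos h c).ne'

theorem continuous_div_norm_rpow {E : Type*} [NormedAddCommGroup E]
    {g : E → ℝ} (hg : Continuous g) (h0 : (0 : E) ∉ tsupport g) (c : ℝ) :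
    Continuous fun x => g x / ‖x‖ ^ c := by
  rw [continuous_iff_continuousAt]
  intro x
  rcases eq_or_ne x 0 with rfl | hx
  · refine (continuousAt_const (y := (0 : ℝ))).congr ?_
    filter_upwards [notMem_tsupport_iff_eventuallyEq.mp h0] with y hy
    simp [hy]
  · have h := norm_pos_iff.mpr hx
    exact hg.continuousAt.div (continuousAt_id.norm.rpow_const (.inl h.ne'))
      (rpow_pos_of_pos h c).ne'

theorem HasCompactSupport.div_right {X : Type*} [TopologicalSpace X] {g h : X → ℝ}
    (hg : HasCompactSupport g) : HasCompactSupport fun x => g x / h x := by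
  simp_rw [div_eq_mul_inv]
  exact hg.mul_right

theorem sq_integral_mul_le {X : Type*} [MeasurableSpace X] {μ : Measure X} {f g : X → ℝ}
    (hf : Integrable (fun x => f x ^ 2) μ) (hg : Integrable (fun x => g x ^ 2) μ)
    (hfg : Integrable (fun x => f x * g x) μ) :
    (∫ x, f x * g x ∂μ) ^ 2 ≤ (∫ x, f x ^ 2 ∂μ) * ∫ x, g x ^ 2 ∂μ := by
  have key (t : ℝ) : 0 ≤ (∫ x, g x ^ 2 ∂μ) * (t * t) + (2 * ∫ x, f x * g x ∂μ) * t
      + ∫ x, f x ^ 2 ∂μ := by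
    have hgf : Integrable (fun x => g x ^ 2 * (t * t) + 2 * (f x * g x) * t) μ :=
      (hg.mul_const _).add ((hfg.const_mul _).mul_const _)
    have h : ∫ x, (f x + t * g x) ^ 2 ∂μ = (∫ x, g x ^ 2 ∂μ) * (t * t)
        + (2 * ∫ x, f x * g x ∂μ) * t + ∫ x, f x ^ 2 ∂μ := by
      rw [← integral_const_mul, ← integral_mul_const, ← integral_mul_const,
        ← integral_add (hg.mul_const _) ((hfg.const_mul _).mul_const _),
        ← integral_add hgf hf]
      congr 1 with x
      ring
    exact h ▸ integral_nonneg fun x => sq_nonneg _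
  have := discrim_le_zero key
  rw [discrim] at this
  linarith

theorem norm_gradient_eq_norm_fderiv {E : Type*} [NormedAddCommGroup E] [InnerProductSpace ℝ E]
    [CompleteSpace E] (u : E → ℝ) (x : E) : ‖gradient u x‖ = ‖fderiv ℝ u x‖ := by
  simp [gradient]

theorem fderiv_sq_div_norm_rpow_apply_self {E : Type*} [NormedAddCommGroup E]
    [InnerProductSpace ℝ E] {u : E → ℝ} {x : E} (hu : DifferentiableAt ℝ u x) (hx : x ≠ 0)
    (c : ℝ) :
    fderiv ℝ (fun x => u x ^ 2 / ‖x‖ ^ c) x x =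
      2 * (u x * fderiv ℝ u x x / ‖x‖ ^ c) - c * (u x ^ 2 / ‖x‖ ^ c) := by
  have h := norm_pos_iff.mpr hx
  have hline : HasDerivAt (fun t : ℝ => t • x) x 1 := by
    simpa using (hasDerivAt_id (1 : ℝ)).smul_const x
  have hu1 : HasDerivAt (fun t : ℝ => u (t • x)) (fderiv ℝ u x x) 1 := by
    refine HasFDerivAt.comp_hasDerivAt (f := fun t : ℝ => t • x) 1 ?_ hline
    simpa using hu.hasFDerivAt
  have hnorm : DifferentiableAt ℝ (fun x : E => ‖x‖ ^ c) x :=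
    ((contDiffAt_norm ℝ hx (n := 1)).rpow_const_of_ne h.ne').differentiableAt one_ne_zero
  have hW : DifferentiableAt ℝ (fun x => u x ^ 2 / ‖x‖ ^ c) x := by
    simp_rw [div_eq_mul_inv]
    exact (hu.pow 2).mul (hnorm.inv (rpow_pos_of_pos h c).ne')
  have hW1 : HasDerivAt (fun t : ℝ => u (t • x) ^ 2 / ‖t • x‖ ^ c)
      (fderiv ℝ (fun x => u x ^ 2 / ‖x‖ ^ c) x x) 1 := by
    refine HasFDerivAt.comp_hasDerivAt (f := fun t : ℝ => t • x)
      (l := fun x => u x ^ 2 / ‖x‖ ^ c) 1 ?_ hline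
    simpa using hW.hasFDerivAt
  have hpow : HasDerivAt (fun t : ℝ => t ^ (-c)) (-c) 1 := by
    simpa using Real.hasDerivAt_rpow_const (x := 1) (p := -c) (.inl one_ne_zero)
  have hW2 : HasDerivAt (fun t : ℝ => u (t • x) ^ 2 / ‖t • x‖ ^ c)
      (2 * (u x * fderiv ℝ u x x / ‖x‖ ^ c) - c * (u x ^ 2 / ‖x‖ ^ c)) 1 := by
    have := ((hu1.pow 2).mul hpow).div_const (‖x‖ ^ c)
    refine (this.congr_of_eventuallyEq ?_).congr_deriv ?_
    · filter_upwards [lt_mem_nhds (zero_lt_one (α := ℝ))] with t ht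
      simp only [norm_smul, Real.norm_eq_abs, abs_of_pos ht, Pi.mul_apply, Pi.pow_apply]
      rw [mul_rpow ht.le h.le, rpow_neg ht.le]
      field_simp
    · simp
      ring
  exact hW1.unique hW2

theorem stmt_6 (N : ℕ) (hN : 1 ≤ N) (a b : ℝ)
    (u : EuclideanSpace ℝ (Fin N) → ℝ)
    (hu : ContDiff ℝ (⊤ : ℕ∞) u) (hcs : HasCompactSupport u)
    (h0 : (0 : EuclideanSpace ℝ (Fin N)) ∉ tsupport u) :
    (∫ x : EuclideanSpace ℝ (Fin N), (u x) ^ 2 / ‖x‖ ^ (2 * a)) *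
      (∫ x : EuclideanSpace ℝ (Fin N), ‖gradient u x‖ ^ 2 / ‖x‖ ^ (2 * b))
      ≥ min (((N : ℝ) - (a + b + 1)) ^ 2 / 4) (((N : ℝ) - (3 * b - a + 3)) ^ 2 / 4) *
        (∫ x : EuclideanSpace ℝ (Fin N), (u x) ^ 2 / ‖x‖ ^ (a + b + 1)) ^ 2 := by
  set c := a + b + 1 with hc
  have hu0 : u 0 = 0 := image_eq_zero_of_notMem_tsupport h0
  have hdu : Continuous (fderiv ℝ u) := hu.continuous_fderiv (by simp)
  have hcd : HasCompactSupport fun x => ‖fderiv ℝ u x‖ := (hcs.fderiv ℝ).norm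
  have h0u : (0 : EuclideanSpace ℝ (Fin N)) ∉ tsupport fun x => |u x| := fun h =>
    h0 (closure_mono (fun x hx => by simpa using hx) h)
  have h0sq : (0 : EuclideanSpace ℝ (Fin N)) ∉ tsupport fun x => u x ^ 2 := fun h =>
    h0 (closure_mono (fun x hx => by simpa using hx) h)
  have h0d : (0 : EuclideanSpace ℝ (Fin N)) ∉ tsupport fun x => ‖fderiv ℝ u x‖ := fun h =>
    h0 (tsupport_fderiv_subset ℝ (closure_mono (fun x hx => by simpa using hx) h))
  have h0m : (0 : EuclideanSpace ℝ (Fin N)) ∉ tsupport fun x => u x * fderiv ℝ u x x := fun h =>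
    h0 (closure_mono (fun x hx => left_ne_zero_of_mul hx) h)
  have hcsq : HasCompactSupport fun x => u x ^ 2 := by
    simp_rw [pow_two]
    exact hcs.mul_right
  have hcu : HasCompactSupport fun x => |u x| := hcs.norm
  have hf := continuous_div_norm_rpow hu.continuous.abs h0u a
  have hg := continuous_div_norm_rpow hdu.norm h0d b
  have hfs := hcu.div_right (h := fun x => ‖x‖ ^ a)
  have hgs := hcd.div_right (h := fun x => ‖x‖ ^ b)
  have hfg : Integrable fun x => |u x| / ‖x‖ ^ a * (‖fderiv ℝ u x‖ / ‖x‖ ^ b) :=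
    (hf.mul hg).integrable_of_hasCompactSupport hfs.mul_right
  have hf2 : Integrable fun x => |u x| / ‖x‖ ^ a * (|u x| / ‖x‖ ^ a) :=
    (hf.mul hf).integrable_of_hasCompactSupport hfs.mul_right
  have hg2 : Integrable fun x => ‖fderiv ℝ u x‖ / ‖x‖ ^ b * (‖fderiv ℝ u x‖ / ‖x‖ ^ b) :=
    (hg.mul hg).integrable_of_hasCompactSupport hgs.mul_right
  have hm : Integrable fun x => u x * fderiv ℝ u x x / ‖x‖ ^ c := (continuous_div_norm_rpow (hu.continuous.mul (hdu.clm_apply continuous_id)) h0m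
    c).integrable_of_hasCompactSupport hcs.mul_right.div_right
  have hW : ContDiff ℝ 1 fun x => u x ^ 2 / ‖x‖ ^ c :=
    contDiff_div_norm_rpow (n := 1) ((hu.of_le (by simp)).pow 2) h0sq c
  have hWs := hcsq.div_right (h := fun x => ‖x‖ ^ c)
  have hWi : Integrable fun x => u x ^ 2 / ‖x‖ ^ c :=
    hW.continuous.integrable_of_hasCompactSupport hWs
  have hCS := sq_integral_mul_le (by simpa only [pow_two] using hf2)
    (by simpa only [pow_two] using hg2) hfg
  have hsq (p t y : ℝ) (hy : 0 ≤ y) : (t / y ^ p) ^ 2 = t ^ 2 / y ^ (2 * p) := by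
    rw [div_pow, mul_comm, rpow_mul hy, rpow_two]
  simp only [hsq _ _ _ (norm_nonneg _), sq_abs] at hCS
  simp only [norm_gradient_eq_norm_fderiv]
  have hdiff (x : EuclideanSpace ℝ (Fin N)) : fderiv ℝ (fun x => u x ^ 2 / ‖x‖ ^ c) x x =
      2 * (u x * fderiv ℝ u x x / ‖x‖ ^ c) - c * (u x ^ 2 / ‖x‖ ^ c) := by
    rcases eq_or_ne x 0 with rfl | hx
    · simp [hu0]
    · exact fderiv_sq_div_norm_rpow_apply_self (hu.differentiable (by simp) x) hx c
  have hibp := integral_fderiv_apply_self hW hWs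
  simp only [hdiff] at hibp
  rw [integral_sub (hm.const_mul 2) (hWi.const_mul c), integral_const_mul,
    integral_const_mul] at hibp
  have hpt (x : EuclideanSpace ℝ (Fin N)) : ‖u x * fderiv ℝ u x x / ‖x‖ ^ c‖ ≤
      |u x| / ‖x‖ ^ a * (‖fderiv ℝ u x‖ / ‖x‖ ^ b) := by
    rcases eq_or_ne x 0 with rfl | hx
    · simp [hu0]
    have h := norm_pos_iff.mpr hx
    have hle := (fderiv ℝ u x).le_opNorm x
    rw [norm_div, norm_mul, Real.norm_of_nonneg (rpow_nonneg h.le c), Real.norm_eq_abs (u x)]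
    calc _ ≤ |u x| * (‖fderiv ℝ u x‖ * ‖x‖) / ‖x‖ ^ c := by gcongr
      _ = _ := by
        rw [hc, rpow_add h, rpow_add h, rpow_one]
        field_simp
  have hle := norm_integral_le_of_norm_le hfg (.of_forall hpt)
  rw [Real.norm_eq_abs] at hle
  calc _ ≤ ((N : ℝ) - c) ^ 2 / 4 * (∫ x, u x ^ 2 / ‖x‖ ^ c) ^ 2 := by
        gcongr
        exact min_le_left _ _
    _ = (∫ x, u x * fderiv ℝ u x x / ‖x‖ ^ c) ^ 2 := by
        have : ∫ x, u x * fderiv ℝ u x x / ‖x‖ ^ c =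
            -((N - c) / 2 * ∫ x, u x ^ 2 / ‖x‖ ^ c) := by linarith
        rw [this]
        ring
    _ ≤ (∫ x, |u x| / ‖x‖ ^ a * (‖fderiv ℝ u x‖ / ‖x‖ ^ b)) ^ 2 := by
        rw [← sq_abs]
        gcongr
    _ ≤ _ := hCS
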